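/- Let d ∈ ℕ, c > 0, σ ∈ [1/2, 1], and ε' ∈ (0, c). Define m = max{⌈log₂(c d^σ / ε')⌉, 2}, r = (2^σ / (2 e m c d^σ)) · (2^σ ε' / (272 π e m c d^σ))^{1/(2m)}, S = ⌈8π / (r ε')⌉, n = ⌈log₂(12 c / ε')⌉, and let G = { (r/2ⁿ)(k + (1/2,…,1/2)) : k ∈ {−2^{n−1}, …, 2^{n−1}−1}^d } be the uniform grid of 2^{nd} points in [−r/2, r/2]^d. Let f : ℝ^d → ℝ be smooth and satisfy the Gevrey bound |∂_α f(y)| ≤ (1/2) c^k (k!)^σ for all y ∈ [−mr, mr]^d, k ∈ ℕ₀, α ∈ [d]^k. Then E_{x ∼ U(G)}[ |f_{(2m)}(x) − f(0) − ∇f(0)·x|² ] ≤ 1/(144 S²), where U(G) denotes the uniform distribution over G. -/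

import Mathlib

/-- Partial derivative of `f : ℝ^d → ℝ` in the `j`-th coordinate direction. -/
noncomputable def pderiv' {d : ℕ} (j : Fin d) (f : (Fin d → ℝ) → ℝ) :
    (Fin d → ℝ) → ℝ :=
  fun x => fderiv ℝ f x (Pi.single j 1)

/-- Consecutive partial differentiation `∂_α = ∂_{α₁}∂_{α₂}⋯∂_{α_k}` along a
multi-index `α ∈ [d]^k`, encoded as a list of coordinates. -/
noncomputable def pderivMulti {d : ℕ} : List (Fin d) → ((Fin d → ℝ) → ℝ) → ((Fin d → ℝ) → ℝ)
  | [], f => f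
  | j :: α, f => pderiv' j (pderivMulti α f)

/-- The central difference coefficients `a_ℓ^{(2m)}`. -/
noncomputable def centralCoeff (m : ℕ) (ℓ : ℤ) : ℝ :=
  if ℓ = 0 then 1
  else (-1 : ℝ) ^ (ℓ + 1) * (Nat.factorial m : ℝ) ^ 2 /
    ((ℓ : ℝ) * (Nat.factorial (m + ℓ).toNat : ℝ) * (Nat.factorial (m - ℓ).toNat : ℝ))

/-- The `2m`-th order smoothing `f_{(2m)}(x) = Σ_{ℓ=−m}^m a_ℓ^{(2m)} f(ℓ x)`. -/
noncomputable def smoothing {d : ℕ} (m : ℕ) (f : (Fin d → ℝ) → ℝ) (x : Fin d → ℝ) : ℝ :=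
  ∑ ℓ ∈ Finset.Icc (-(m : ℤ)) (m : ℤ), centralCoeff m ℓ * f ((ℓ : ℝ) • x)

/-- The grid point of the uniform grid `G ⊆ [−r/2, r/2]^d` with `2^n` points per
direction, indexed by `v ∈ {0,…,2^n−1}^d` (corresponding to
`k = v − 2^{n−1} ∈ {−2^{n−1},…,2^{n−1}−1}^d`); the point is
`(r/2ⁿ)(k + (1/2,…,1/2))`. -/
noncomputable def gridPoint {d : ℕ} (n : ℕ) (r : ℝ) (v : Fin d → Fin (2 ^ n)) :
    Fin d → ℝ :=
  fun i => r / 2 ^ n * (((v i : ℕ) : ℝ) - 2 ^ n / 2 + 1 / 2)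

/-! The deviation of the smoothing from the first-order expansion is a Taylor tail.  Expanding
`t ↦ f (t • x)` at `0` gives `f_{(2m)}(x) = ∑ₖ Aₖ Tₖ(x)`, where `Tₖ` is the homogeneous Taylor
polynomial of degree `k` and `Aₖ = ∑_ℓ a_ℓ ℓ ^ k`.  The central difference coefficients are chosen
so that `A₀ = A₁ = 1` and `Aₖ = 0` for `2 ≤ k ≤ 2m` (`moment_zero`, `moment_succ`), and
`|Aₖ| ≤ 2 m ^ k` for `k ≥ 1` (`abs_moment_le`).

The mean square of `Tₖ` over the grid is at most the square of `(1 / 2) (3 / 2 · c r d ^ σ) ^ k`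
(`sum_sq_dirDeriv_le`).  For `k ≤ d`, the mixed moments of the grid coordinates are nonnegative, so
all partial derivatives may be replaced by their common bound, which leaves the `2k`-th moment of a
sum of `d` independent symmetric bounded variables; this is sub-Gaussian (`sum_pow_le`).  For
`k > d` the triangle inequality suffices because of the factor `(k!) ^ (σ - 1)`.

With `q = 3 / 2 · m c r d ^ σ`, Minkowski's inequality therefore bounds the root mean square of the
tail by `∑_{k > 2m} q ^ k = q ^ (2m + 1) / (1 - q)` (`mean_sq_le`), and the choice of `r` makes this
at most `1 / (12 S)` (`parameter_bound`). -/

/-! ### Taylor expansion along rays -/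

/-- Two-sided Taylor bound for a function whose successive derivatives are given as a sequence. -/
theorem taylor_of_deriv_seq (P : ℕ → ℝ → ℝ) (hP : ∀ k t, HasDerivAt (P k) (P (k + 1) t) t)
    (N : ℕ) {M ρ : ℝ} (hM : ∀ t, |t| ≤ ρ → |P (N + 1) t| ≤ M) {t : ℝ} (ht : |t| ≤ ρ) :
    |P 0 t - ∑ k ∈ Finset.range (N + 1), P k 0 * t ^ k / (k.factorial : ℝ)| ≤
      M * |t| ^ (N + 1) / ((N + 1).factorial : ℝ) := by
  have hit : ∀ k, iteratedDeriv k (P 0) = P k := by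
    intro k
    induction k with
    | zero => simp
    | succ k ih => rw [iteratedDeriv_succ, ih]; funext s; exact (hP k s).deriv
  have hM0 : 0 ≤ M := (abs_nonneg _).trans (hM t ht)
  have hcd : ∀ n : ℕ, ContDiff ℝ n (P 0) := fun n =>
    contDiff_of_differentiable_iteratedDeriv fun k _ => by
      rw [hit]; exact fun s => (hP k s).differentiableAt
  rcases eq_or_ne t 0 with rfl | h0
  · rw [Finset.sum_range_succ']
    simp
  · obtain ⟨s, hs, h⟩ := taylor_mean_remainder_lagrange_iteratedDeriv (n := N) (f := P 0)
      h0.symm (hcd (N + 1)).contDiffOn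
    have hT : taylorWithinEval (P 0) N (Set.uIcc 0 t) 0 t =
        ∑ k ∈ Finset.range (N + 1), P k 0 * t ^ k / (k.factorial : ℝ) := by
      rw [taylor_within_apply]
      refine Finset.sum_congr rfl fun k _ => ?_
      rw [iteratedDerivWithin_eq_iteratedDeriv (uniqueDiffOn_uIcc h0.symm)
        (hcd k).contDiffAt Set.left_mem_uIcc, hit]
      simp only [sub_zero, smul_eq_mul]
      field_simp
    rw [hT, hit, sub_zero] at h
    rw [h, abs_div, abs_mul, abs_pow, Nat.abs_cast]
    have hs' : |s| ≤ ρ := by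
      refine le_trans ?_ ht
      rw [Set.uIoo, Set.mem_Ioo] at hs
      rcases le_total 0 t with h | h
      · rw [min_eq_left h, max_eq_right h] at hs
        rw [abs_of_nonneg h, abs_of_pos hs.1]; exact hs.2.le
      · rw [min_eq_right h, max_eq_left h] at hs
        rw [abs_of_nonpos h, abs_of_neg hs.2]; linarith [hs.1]
    gcongr
    exact hM s hs'

/-- The `k`-th derivative of `t ↦ f (t • x)`, written out as a sum over multi-indices. -/
noncomputable def dirDeriv {d : ℕ} (f : (Fin d → ℝ) → ℝ) (x : Fin d → ℝ) (k : ℕ) (t : ℝ) : ℝ :=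
  ∑ α : Fin k → Fin d, (∏ i, x (α i)) * pderivMulti (List.ofFn α) f (t • x)

theorem contDiff_pderivMulti {d : ℕ} {f : (Fin d → ℝ) → ℝ} (hf : ContDiff ℝ (⊤ : ℕ∞) f)
    (α : List (Fin d)) : ContDiff ℝ (⊤ : ℕ∞) (pderivMulti α f) := by
  induction α with
  | nil => exact hf
  | cons j α ih =>
    exact (ih.fderiv_right (m := (⊤ : ℕ∞)) (by simp)).clm_apply contDiff_const

theorem hasDerivAt_comp_smul {d : ℕ} {g : (Fin d → ℝ) → ℝ} (hg : ContDiff ℝ (⊤ : ℕ∞) g)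
    (x : Fin d → ℝ) (t : ℝ) :
    HasDerivAt (fun s : ℝ => g (s • x)) (∑ j, x j * pderiv' j g (t • x)) t := by
  have h1 : HasFDerivAt g (fderiv ℝ g (t • x)) (t • x) :=
    (hg.differentiable (by simp) _).hasFDerivAt
  have h2 : HasDerivAt (fun s : ℝ => s • x) x t := by
    simpa using (hasDerivAt_id t).smul_const x
  have h3 := h1.comp_hasDerivAt t h2
  have h4 : fderiv ℝ g (t • x) x = ∑ j, x j * pderiv' j g (t • x) := by
    have hx : x = ∑ j, x j • (Pi.single j (1 : ℝ) : Fin d → ℝ) := pi_eq_sum_univ' x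
    calc fderiv ℝ g (t • x) x
        = fderiv ℝ g (t • x) (∑ j, x j • (Pi.single j (1 : ℝ) : Fin d → ℝ)) := by rw [← hx]
      _ = _ := by rw [map_sum]; simp [pderiv']
  rw [h4] at h3
  exact h3

theorem hasDerivAt_dirDeriv {d : ℕ} {f : (Fin d → ℝ) → ℝ} (hf : ContDiff ℝ (⊤ : ℕ∞) f)
    (x : Fin d → ℝ) (k : ℕ) (t : ℝ) :
    HasDerivAt (dirDeriv f x k) (dirDeriv f x (k + 1) t) t := by
  have h : HasDerivAt (dirDeriv f x k) (∑ α : Fin k → Fin d, (∏ i, x (α i)) *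
      ∑ j, x j * pderiv' j (pderivMulti (List.ofFn α) f) (t • x)) t := by
    unfold dirDeriv
    exact HasDerivAt.fun_sum fun α _ =>
      (hasDerivAt_comp_smul (contDiff_pderivMulti hf _) x t).const_mul _
  convert h using 1
  unfold dirDeriv
  rw [← (Fin.consEquiv fun _ => Fin d).sum_comp, Fintype.sum_prod_type_right]
  refine Finset.sum_congr rfl fun α _ => ?_
  rw [Finset.mul_sum]
  refine Finset.sum_congr rfl fun j _ => ?_
  simp [Fin.consEquiv, Fin.prod_univ_succ, List.ofFn_succ, pderivMulti]
  ring

theorem dirDeriv_zero {d : ℕ} (f : (Fin d → ℝ) → ℝ) (x : Fin d → ℝ) (t : ℝ) :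
    dirDeriv f x 0 t = f (t • x) := by
  simp [dirDeriv, pderivMulti]

theorem dirDeriv_one {d : ℕ} {f : (Fin d → ℝ) → ℝ} (hf : ContDiff ℝ (⊤ : ℕ∞) f)
    (x : Fin d → ℝ) : dirDeriv f x 1 0 = fderiv ℝ f 0 x := by
  have h := hasDerivAt_dirDeriv hf x 0 0
  have h1 : HasFDerivAt f (fderiv ℝ f ((0 : ℝ) • x)) ((0 : ℝ) • x) :=
    (hf.differentiable (by simp) _).hasFDerivAt
  have h2 : HasDerivAt (fun s : ℝ => s • x) x 0 := by
    simpa using (hasDerivAt_id (0 : ℝ)).smul_const x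
  have h3 := h1.comp_hasDerivAt 0 h2
  have h4 : dirDeriv f x 0 = f ∘ fun s : ℝ => s • x := by
    funext s; exact dirDeriv_zero f x s
  rw [h4] at h
  rw [h.unique h3, zero_smul]

theorem abs_dirDeriv_le {d : ℕ} {f : (Fin d → ℝ) → ℝ} {x : Fin d → ℝ} {k : ℕ} {t B ρ : ℝ}
    (hx : ∀ i, |x i| ≤ ρ) (hB : ∀ α : Fin k → Fin d, |pderivMulti (List.ofFn α) f (t • x)| ≤ B) :
    |dirDeriv f x k t| ≤ (d : ℝ) ^ k * (ρ ^ k * B) := by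
  refine (Finset.abs_sum_le_sum_abs _ _).trans ?_
  have : ∀ α ∈ (Finset.univ : Finset (Fin k → Fin d)),
      |(∏ i, x (α i)) * pderivMulti (List.ofFn α) f (t • x)| ≤ ρ ^ k * B := by
    intro α _
    rw [abs_mul, Finset.abs_prod]
    have h1 : ∏ i, |x (α i)| ≤ ∏ _i : Fin k, ρ :=
      Finset.prod_le_prod (fun _ _ => abs_nonneg _) fun i _ => hx _
    have h0 : (0:ℝ) ≤ ∏ i, |x (α i)| := Finset.prod_nonneg fun _ _ => abs_nonneg _
    simp only [Finset.prod_const, Finset.card_univ, Fintype.card_fin] at h1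
    exact mul_le_mul h1 (hB α) (abs_nonneg _) (h0.trans h1)
  refine (Finset.sum_le_sum this).trans ?_
  simp

/-! ### Moments of the central difference coefficients -/

theorem sq_factorial_le (m j : ℕ) (h : j ≤ m) :
    m.factorial ^ 2 ≤ (m + j).factorial * (m - j).factorial := by
  induction j with
  | zero => simp [sq]
  | succ j ih =>
    refine (ih (by omega)).trans ?_
    obtain ⟨p, rfl⟩ : ∃ p, m = j + 1 + p := ⟨m - (j + 1), by omega⟩
    have e1 : j + 1 + p - j = p + 1 := by omega
    have e2 : j + 1 + p - (j + 1) = p := by omega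
    have e3 : j + 1 + p + (j + 1) = (j + 1 + p + j) + 1 := by omega
    rw [e1, e2, e3, Nat.factorial_succ p, Nat.factorial_succ (j + 1 + p + j)]
    have : p + 1 ≤ j + 1 + p + j + 1 := by omega
    calc _ = (p + 1) * ((j + 1 + p + j).factorial * p.factorial) := by ring
      _ ≤ (j + 1 + p + j + 1) * ((j + 1 + p + j).factorial * p.factorial) := by gcongr
      _ = _ := by ring

theorem centralCoeff_neg (m : ℕ) {l : ℤ} (hl : l ≠ 0) :
    centralCoeff m (-l) = -centralCoeff m l := by
  have h1 : (-1 : ℝ) ^ (-l + 1) = (-1 : ℝ) ^ (l + 1) := by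
    rw [zpow_add₀ (by norm_num), zpow_add₀ (by norm_num), zpow_neg, ← inv_zpow]
    norm_num
  have hl' : (l : ℝ) ≠ 0 := by exact_mod_cast hl
  simp only [centralCoeff, hl, neg_eq_zero, if_false, h1]
  rw [show (m : ℤ) + -l = m - l by ring, show (m : ℤ) - -l = m + l by ring]
  push_cast
  field_simp

/-- Uses `|a_ℓ| ≤ 1 / |ℓ|`, a consequence of `(m!)² ≤ (m + ℓ)! (m - ℓ)!`. -/
theorem abs_centralCoeff_mul_pow_le (m : ℕ) {l : ℤ} (hl : l ∈ Finset.Icc (-(m : ℤ)) m) (k : ℕ) :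
    |centralCoeff m l * (l : ℝ) ^ (k + 1)| ≤ if l = 0 then 0 else (m : ℝ) ^ k := by
  rw [Finset.mem_Icc] at hl
  split_ifs with h0
  · simp [h0]
  · have hl' : (l : ℝ) ≠ 0 := by exact_mod_cast h0
    have hm : |(l : ℝ)| ≤ m := by
      rw [abs_le]; exact ⟨by exact_mod_cast hl.1, by exact_mod_cast hl.2⟩
    have hfac : (m.factorial : ℝ) ^ 2 ≤
        ((m + l).toNat.factorial : ℝ) * ((m - l).toNat.factorial : ℝ) := by
      rcases le_total 0 l with h | h
      · obtain ⟨j, rfl⟩ := Int.eq_ofNat_of_zero_le h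
        have := sq_factorial_le m j (by omega)
        rw [show ((m : ℤ) + j).toNat = m + j by omega, show ((m : ℤ) - j).toNat = m - j by omega]
        exact_mod_cast this
      · obtain ⟨j, hj⟩ := Int.eq_ofNat_of_zero_le (neg_nonneg.2 h)
        have := sq_factorial_le m j (by omega)
        rw [show ((m : ℤ) + l).toNat = m - j by omega, show ((m : ℤ) - l).toNat = m + j by omega,
          mul_comm]
        exact_mod_cast this
    have hpos : 0 < ((m + l).toNat.factorial : ℝ) * ((m - l).toNat.factorial : ℝ) := by positivity
    have : centralCoeff m l * (l : ℝ) ^ (k + 1) = (-1 : ℝ) ^ (l + 1) *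
        ((m.factorial : ℝ) ^ 2 /
          (((m + l).toNat.factorial : ℝ) * ((m - l).toNat.factorial : ℝ))) * (l : ℝ) ^ k := by
      simp only [centralCoeff, h0, if_false]
      field_simp
      ring
    rw [this, abs_mul, abs_mul, abs_zpow, abs_neg, abs_one, one_zpow, one_mul, abs_pow]
    have h2 : |(m.factorial : ℝ) ^ 2 /
          (((m + l).toNat.factorial : ℝ) * ((m - l).toNat.factorial : ℝ))| ≤ 1 := by
      rw [abs_of_nonneg (by positivity)]
      exact (div_le_one hpos).2 hfac
    calc _ ≤ 1 * (m : ℝ) ^ k := by gcongr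
      _ = _ := one_mul _

theorem abs_moment_le (m k : ℕ) :
    |∑ l ∈ Finset.Icc (-(m : ℤ)) m, centralCoeff m l * (l : ℝ) ^ (k + 1)| ≤
      2 * (m : ℝ) ^ (k + 1) := by
  refine (Finset.abs_sum_le_sum_abs _ _).trans ?_
  refine (Finset.sum_le_sum fun l hl => abs_centralCoeff_mul_pow_le m hl k).trans ?_
  have h : (∑ l ∈ Finset.Icc (-(m : ℤ)) m, if l = 0 then (0 : ℝ) else (m : ℝ) ^ k) =
      (∑ l ∈ Finset.Icc (-(m : ℤ)) m, (m : ℝ) ^ k) -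
        ∑ l ∈ Finset.Icc (-(m : ℤ)) m, if l = 0 then (m : ℝ) ^ k else 0 := by
    rw [← Finset.sum_sub_distrib]
    refine Finset.sum_congr rfl fun l _ => ?_
    split_ifs <;> simp
  rw [h, Finset.sum_ite_eq', if_pos (by simp), Finset.sum_const, Int.card_Icc,
    show ((m : ℤ) + 1 - -(m : ℤ)).toNat = 2 * m + 1 by omega, nsmul_eq_mul]
  push_cast
  apply le_of_eq; ring

/-- The nonzero coefficients are odd in `ℓ` and cancel in pairs. -/
theorem moment_zero (m : ℕ) :
    ∑ l ∈ Finset.Icc (-(m : ℤ)) m, centralCoeff m l = 1 := by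
  have h1 : ∑ l ∈ Finset.Icc (-(m : ℤ)) m, (centralCoeff m l - if l = 0 then 1 else 0) = 0 := by
    refine Finset.sum_involution (fun l _ => -l) ?_ ?_ ?_ ?_
    · intro l _
      by_cases h : l = 0
      · simp [h, centralCoeff]
      · simp [h, centralCoeff_neg]
    · intro l _ h h'
      have : l = 0 := by omega
      simp [this, centralCoeff] at h
    · intro l hl
      rw [Finset.mem_Icc] at *
      omega
    · intro l _; simp
  rw [Finset.sum_sub_distrib, Finset.sum_ite_eq', if_pos (by simp)] at h1
  linarith

open fwdDiff in
/-- Up to the term `ℓ = 0`, the sum is a multiple of the `2m`-th finite difference of `x ↦ x ^ k`,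
which vanishes for `k < 2m`. -/
theorem moment_succ (m k : ℕ) (hk : k < 2 * m) :
    ∑ l ∈ Finset.Icc (-(m : ℤ)) m, centralCoeff m l * (l : ℝ) ^ (k + 1) =
      if k = 0 then 1 else 0 := by
  set C : ℝ := (m.factorial : ℝ) ^ 2 / ((2 * m).factorial : ℝ) with hC
  have hd : ∑ j ∈ Finset.range (2 * m + 1),
      ((-1 : ℝ) ^ (2 * m - j) * ((2 * m).choose j : ℝ)) * (-(m : ℝ) + j) ^ k = 0 := by
    have h := congrFun (fwdDiff_iter_pow_eq_zero_of_lt (R := ℝ) hk) (-(m : ℝ))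
    rw [fwdDiff_iter_eq_sum_shift] at h
    simpa using h
  -- At `ℓ = 0` the general formula would give `-ℓ ^ k`, which is nonzero exactly when `k = 0`
  -- (as `0 ^ 0 = 1`); subtracting the indicator makes the reindexed identity hold for every `ℓ`.
  have hre : ∑ l ∈ Finset.Icc (-(m : ℤ)) m, (centralCoeff m l * (l : ℝ) ^ (k + 1) -
      if l = 0 then (if k = 0 then (1 : ℝ) else 0) else 0) =
      ∑ j ∈ Finset.range (2 * m + 1),
        -((-1 : ℝ) ^ m * C) * (((-1 : ℝ) ^ (2 * m - j) * ((2 * m).choose j : ℝ)) *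
          (-(m : ℝ) + j) ^ k) := by
    symm
    refine Finset.sum_bij' (fun j _ => (j : ℤ) - m) (fun l _ => (l + m).toNat) ?_ ?_ ?_ ?_ ?_
    · intro j hj; simp only [Finset.mem_range, Finset.mem_Icc] at *; omega
    · intro j hj; simp only [Finset.mem_range, Finset.mem_Icc] at *; omega
    · intro j hj; simp only [Finset.mem_range] at *; omega
    · intro j hj; simp only [Finset.mem_Icc] at *; omega
    · intro j hj
      have hj' : j ≤ 2 * m := by simpa [Nat.lt_succ_iff] using hj
      have hch : ((2 * m).choose j : ℝ) =
          ((2 * m).factorial : ℝ) / ((j.factorial : ℝ) * ((2 * m - j).factorial : ℝ)) :=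
        Nat.cast_choose ℝ hj'
      have hfm : ((2 * m).factorial : ℝ) ≠ 0 := by positivity
      have e1 : ((m : ℤ) + ((j : ℤ) - m)).toNat = j := by omega
      have e2 : ((m : ℤ) - ((j : ℤ) - m)).toNat = 2 * m - j := by omega
      have hs : (-1 : ℝ) ^ (2 * m - j) = (-1 : ℝ) ^ j := by
        rw [neg_one_pow_eq_pow_mod_two, neg_one_pow_eq_pow_mod_two (n := j)]
        congr 1
        omega
      have hmm : (-1 : ℝ) ^ m * (-1 : ℝ) ^ m = 1 := by rw [← mul_pow]; simp
      by_cases h0 : (j : ℤ) - m = 0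
      · obtain rfl : j = m := by omega
        have e3 : 2 * j - j = j := by omega
        rw [hs, hch, hC, e3]
        have hfj : (j.factorial : ℝ) ≠ 0 := by positivity
        rcases Nat.eq_zero_or_pos k with rfl | hk0
        · simp only [sub_self, if_true, pow_zero]
          field_simp
          push_cast
          linear_combination -hmm
        · simp [hk0.ne']
      · have h0' : (j : ℝ) - m ≠ 0 := by exact_mod_cast h0
        have hz : (-1 : ℝ) ^ ((j : ℤ) - m + 1) = -((-1) ^ m * (-1) ^ j) := by
          rw [zpow_add₀ (by norm_num), zpow_sub₀ (by norm_num)]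
          simp only [zpow_natCast, zpow_one]
          rw [div_eq_mul_inv, inv_eq_of_mul_eq_one_left hmm]
          ring
        simp only [centralCoeff, h0, if_false, e1, e2, hz, sub_zero]
        rw [hs, hch, hC]
        push_cast
        have h1 : (j.factorial : ℝ) ≠ 0 := by positivity
        have h2 : ((2 * m - j).factorial : ℝ) ≠ 0 := by positivity
        rw [show -(m : ℝ) + j = (j : ℝ) - m by ring]
        field_simp
        ring
  rw [← Finset.mul_sum, hd, mul_zero, Finset.sum_sub_distrib, Finset.sum_ite_eq',
    if_pos (by simp)] at hre
  linarith

/-! ### Moments of sums of independent symmetric variables -/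

/-- Mixed moments of independent symmetric variables are nonnegative: a factor with an odd exponent
vanishes, one with an even exponent is nonnegative. -/
theorem sum_prod_comp_nonneg {d : ℕ} {κ ι : Type*} [Fintype κ] [Fintype ι] (y : κ → ℝ)
    (e : κ ≃ κ) (he : ∀ u, y (e u) = -y u) (γ : ι → Fin d) :
    0 ≤ ∑ v : Fin d → κ, ∏ i, y (v (γ i)) := by
  classical
  have h1 : ∀ v : Fin d → κ, ∏ i, y (v (γ i)) =
      ∏ j, y (v j) ^ (Finset.univ.filter fun i => γ i = j).card := by
    intro v
    rw [← Finset.prod_fiberwise' (g := γ) (f := fun j => y (v j))]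
    simp
  simp_rw [h1]
  rw [← Fintype.prod_sum (fun j u => y u ^ (Finset.univ.filter fun i => γ i = j).card)]
  refine Finset.prod_nonneg fun j _ => ?_
  rcases Nat.even_or_odd (Finset.univ.filter fun i => γ i = j).card with h | h
  · exact Finset.sum_nonneg fun u _ => h.pow_nonneg _
  · have := e.sum_comp fun u => y u ^ (Finset.univ.filter fun i => γ i = j).card
    simp only [he, h.neg_pow, Finset.sum_neg_distrib] at this
    linarith

/-- Since mixed moments are nonnegative, coefficients bounded by `B` can all be replaced by `B`; the
form then becomes `B (∑ⱼ xⱼ) ^ k`. -/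
theorem sum_sq_multilinear_le {d : ℕ} {κ : Type*} [Fintype κ] (y : κ → ℝ)
    (e : κ ≃ κ) (he : ∀ u, y (e u) = -y u) (k : ℕ) (b : (Fin k → Fin d) → ℝ) {B : ℝ}
    (hb : ∀ α, |b α| ≤ B) :
    ∑ v : Fin d → κ, (∑ α, (∏ i, y (v (α i))) * b α) ^ 2 ≤
      B ^ 2 * ∑ v : Fin d → κ, (∑ j, y (v j)) ^ (2 * k) := by
  have hexp : ∀ c : (Fin k → Fin d) → ℝ,
      ∑ v : Fin d → κ, (∑ α, (∏ i, y (v (α i))) * c α) ^ 2 =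
      ∑ α, ∑ β, c α * c β * ∑ v : Fin d → κ, ∏ i, y (v (Sum.elim α β i)) := by
    intro c
    simp_rw [sq, Finset.sum_mul_sum, Finset.mul_sum]
    rw [Finset.sum_comm]
    refine Finset.sum_congr rfl fun α _ => ?_
    rw [Finset.sum_comm]
    refine Finset.sum_congr rfl fun β _ => Finset.sum_congr rfl fun v _ => ?_
    rw [Fintype.prod_sum_type]
    simp only [Sum.elim_inl, Sum.elim_inr]
    ring
  have h2 : ∑ v : Fin d → κ, (∑ j, y (v j)) ^ (2 * k) =
      ∑ α : Fin k → Fin d, ∑ β : Fin k → Fin d,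
        ∑ v : Fin d → κ, ∏ i, y (v (Sum.elim α β i)) := by
    have := hexp fun _ => 1
    simp only [mul_one, one_mul] at this
    rw [← this]
    refine Finset.sum_congr rfl fun v _ => ?_
    rw [mul_comm 2 k, pow_mul, Fintype.sum_pow]
  rw [hexp, h2, Finset.mul_sum]
  refine Finset.sum_le_sum fun α _ => ?_
  rw [Finset.mul_sum]
  refine Finset.sum_le_sum fun β _ => ?_
  refine mul_le_mul_of_nonneg_right ?_ (sum_prod_comp_nonneg y e he _)
  calc b α * b β ≤ |b α * b β| := le_abs_self _
    _ = |b α| * |b β| := abs_mul _ _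
    _ ≤ B * B := mul_le_mul (hb α) (hb β) (abs_nonneg _) ((abs_nonneg _).trans (hb α))
    _ = B ^ 2 := (sq B).symm

/-- Hoeffding's bound for a symmetric variable bounded by `ρ`. -/
theorem sum_exp_le {κ : Type*} [Fintype κ] (y : κ → ℝ)
    (e : κ ≃ κ) (he : ∀ u, y (e u) = -y u) {ρ : ℝ} (hρ : ∀ u, |y u| ≤ ρ) (s : ℝ) :
    ∑ u, Real.exp (s * y u) ≤ Fintype.card κ * Real.exp (s ^ 2 * ρ ^ 2 / 2) := by
  have h1 : ∑ u, Real.exp (s * y u) = ∑ u, Real.cosh (s * y u) := by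
    have h := e.sum_comp fun u => Real.exp (s * y u)
    simp only [he] at h
    have h' : ∑ u, Real.cosh (s * y u) =
        (∑ u, Real.exp (s * y u) + ∑ u, Real.exp (s * -y u)) / 2 := by
      rw [← Finset.sum_add_distrib, Finset.sum_div]
      refine Finset.sum_congr rfl fun u _ => ?_
      rw [Real.cosh_eq, mul_neg]
    rw [h', h]; ring
  rw [h1]
  have h2 : ∀ u ∈ (Finset.univ : Finset κ),
      Real.cosh (s * y u) ≤ Real.exp (s ^ 2 * ρ ^ 2 / 2) := by
    intro u _
    refine (Real.cosh_le_exp_half_sq _).trans (Real.exp_le_exp.2 ?_)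
    have : y u ^ 2 ≤ ρ ^ 2 := by
      rw [← sq_abs]; exact pow_le_pow_left₀ (abs_nonneg _) (hρ u) 2
    rw [mul_pow]; gcongr
  refine (Finset.sum_le_sum h2).trans ?_
  simp

/-- Even moments of a sum are controlled by exponential moments, via `z ^ (2k) / (2k)! ≤ cosh z`. -/
theorem sum_pow_le_mgf {d : ℕ} {κ : Type*} [Fintype κ] (y : κ → ℝ)
    (e : κ ≃ κ) (he : ∀ u, y (e u) = -y u) {ρ : ℝ} (hρ : ∀ u, |y u| ≤ ρ) (s : ℝ) (k : ℕ) :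
    s ^ (2 * k) * ∑ v : Fin d → κ, (∑ j, y (v j)) ^ (2 * k) ≤
      (2 * k).factorial * ((Fintype.card κ : ℝ) ^ d * Real.exp (d * (s ^ 2 * ρ ^ 2 / 2))) := by
  have hm : ∀ s : ℝ, ∑ v : Fin d → κ, Real.exp (s * ∑ j, y (v j)) ≤
      (Fintype.card κ : ℝ) ^ d * Real.exp (d * (s ^ 2 * ρ ^ 2 / 2)) := by
    intro s
    have h1 : ∑ v : Fin d → κ, Real.exp (s * ∑ j, y (v j)) =
        (∑ u, Real.exp (s * y u)) ^ d := by
      simp_rw [Finset.mul_sum, Real.exp_sum]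
      rw [← Fintype.prod_sum (fun (_ : Fin d) u => Real.exp (s * y u))]
      simp
    rw [h1, Real.exp_nat_mul, ← mul_pow]
    exact pow_le_pow_left₀ (Finset.sum_nonneg fun _ _ => (Real.exp_pos _).le)
      (sum_exp_le y e he hρ s) d
  have hc : ∀ z : ℝ, z ^ (2 * k) ≤
      (2 * k).factorial * ((Real.exp z + Real.exp (-z)) / 2) := by
    intro z
    have h := le_hasSum (Real.hasSum_cosh z) k fun j _ => by
      rw [pow_mul]; positivity
    rw [div_le_iff₀ (by positivity), Real.cosh_eq] at h
    linarith
  rw [Finset.mul_sum]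
  calc ∑ v : Fin d → κ, s ^ (2 * k) * (∑ j, y (v j)) ^ (2 * k)
      ≤ ∑ v : Fin d → κ, (2 * k).factorial *
          ((Real.exp (s * ∑ j, y (v j)) + Real.exp (-s * ∑ j, y (v j))) / 2) := by
        refine Finset.sum_le_sum fun v _ => ?_
        rw [← mul_pow, neg_mul]; exact hc _
    _ = (2 * k).factorial * ((∑ v : Fin d → κ, Real.exp (s * ∑ j, y (v j)) +
          ∑ v : Fin d → κ, Real.exp (-s * ∑ j, y (v j))) / 2) := by
        rw [← Finset.mul_sum, ← Finset.sum_div, Finset.sum_add_distrib]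
    _ ≤ _ := by
        have h1 := hm s
        have h2 := hm (-s)
        rw [neg_sq] at h2
        gcongr
        linarith

/-- Sub-Gaussian moments of a sum of `d` independent symmetric variables bounded by `ρ`;
comes from the exponential moment at the optimal parameter `s² = 2k / (d ρ²)`. -/
theorem sum_pow_le {d : ℕ} (hd : 0 < d) {κ : Type*} [Fintype κ] (y : κ → ℝ)
    (e : κ ≃ κ) (he : ∀ u, y (e u) = -y u) {ρ : ℝ} (hρ0 : 0 < ρ) (hρ : ∀ u, |y u| ≤ ρ)
    {k : ℕ} (hk : 0 < k) :
    ∑ v : Fin d → κ, (∑ j, y (v j)) ^ (2 * k) ≤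
      (Fintype.card κ : ℝ) ^ d *
        ((2 * k).factorial * (Real.exp 1 * d * ρ ^ 2 / (2 * k)) ^ k) := by
  have hd' : (0 : ℝ) < d := by exact_mod_cast hd
  have hk' : (0 : ℝ) < k := by exact_mod_cast hk
  set s : ℝ := √(2 * k / (d * ρ ^ 2)) with hs
  have hs2 : s ^ 2 = 2 * k / (d * ρ ^ 2) := Real.sq_sqrt (by positivity)
  have h := sum_pow_le_mgf (d := d) y e he hρ s k
  have h1 : (d : ℝ) * (s ^ 2 * ρ ^ 2 / 2) = k * 1 := by rw [hs2]; field_simp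
  rw [h1, Real.exp_nat_mul, pow_mul, hs2] at h
  have h2 : (0 : ℝ) < (2 * k / (d * ρ ^ 2)) ^ k := by positivity
  rw [← le_div_iff₀' h2] at h
  refine h.trans (le_of_eq ?_)
  rw [div_pow, div_pow, mul_pow, mul_pow, mul_pow, mul_pow]
  field_simp

/-! ### Mean squares of Taylor terms -/

theorem rpow_two_bounds {σ : ℝ} (hσ : σ ∈ Set.Icc (1 / 2 : ℝ) 1) :
    0 < (2 : ℝ) ^ σ ∧ (2 : ℝ) ^ σ ≤ 2 := by
  refine ⟨by positivity, ?_⟩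
  calc (2 : ℝ) ^ σ ≤ 2 ^ (1 : ℝ) := Real.rpow_le_rpow_of_exponent_le (by norm_num) hσ.2
    _ = 2 := Real.rpow_one 2

/-- Triangle-inequality bound for a Taylor term of order `k ≥ d`.  Here `k! ≥ (d / e) ^ k`, so the
factor `(k!) ^ (σ - 1)` turns `d ^ k` into `(e ^ (1 - σ) d ^ σ) ^ k`, and `e ^ (1 - σ) ≤ √e ≤ 2`
is absorbed by the half side length `r / 2`. -/
theorem trivial_term_le {d k : ℕ} (hd : 0 < d) (hdk : d ≤ k) {c r σ : ℝ} (hc : 0 < c) (hr : 0 < r)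
    (hσ : σ ∈ Set.Icc (1 / 2 : ℝ) 1) :
    (d : ℝ) ^ k * ((r / 2) ^ k * (1 / 2 * c ^ k * (k.factorial : ℝ) ^ σ)) / k.factorial ≤
      1 / 2 * (c * r * (d : ℝ) ^ σ) ^ k := by
  have hd' : (0 : ℝ) < d := by exact_mod_cast hd
  have hf : (0 : ℝ) < k.factorial := by positivity
  have h1 : (1 : ℝ) / k.factorial ≤ (Real.exp 1 / d) ^ k := by
    have h := Real.pow_div_factorial_le_exp (x := d) hd'.le k
    have h' : Real.exp d ≤ Real.exp 1 ^ k := by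
      rw [← Real.exp_nat_mul, mul_one]; exact Real.exp_le_exp.2 (by exact_mod_cast hdk)
    rw [div_pow, le_div_iff₀ (by positivity)]
    calc 1 / (k.factorial : ℝ) * d ^ k = d ^ k / k.factorial := by ring
      _ ≤ _ := h.trans h'
  have h2 : (k.factorial : ℝ) ^ σ / k.factorial = (1 / (k.factorial : ℝ)) ^ (1 - σ) := by
    rw [one_div, Real.inv_rpow hf.le, Real.rpow_sub hf, Real.rpow_one, inv_div]
  have h3 : (1 / (k.factorial : ℝ)) ^ (1 - σ) ≤ ((Real.exp 1 / d) ^ (1 - σ)) ^ k := by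
    refine (Real.rpow_le_rpow (by positivity) h1 (by linarith [hσ.2])).trans (le_of_eq ?_)
    rw [← Real.rpow_natCast, ← Real.rpow_natCast, ← Real.rpow_mul (by positivity),
      ← Real.rpow_mul (by positivity), mul_comm]
  have h4 : (d : ℝ) * (Real.exp 1 / d) ^ (1 - σ) ≤ 2 * (d : ℝ) ^ σ := by
    have e1 : (d : ℝ) * (Real.exp 1 / d) ^ (1 - σ) = Real.exp (1 - σ) * (d : ℝ) ^ σ := by
      rw [Real.div_rpow (Real.exp_pos _).le hd'.le, Real.exp_one_rpow, Real.rpow_sub hd',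
        Real.rpow_one]
      have := (Real.rpow_pos_of_pos hd' σ).ne'
      field_simp
    rw [e1]
    have e2 : Real.exp (1 - σ) ≤ 2 := by
      have h5 : Real.exp (1 - σ) ≤ Real.exp (1 / 2) := Real.exp_le_exp.2 (by linarith [hσ.1])
      have h6 : Real.exp (1 / 2) ^ 2 = Real.exp 1 := by
        rw [← Real.exp_nat_mul]; norm_num
      have h7 := Real.exp_one_lt_three
      nlinarith [Real.exp_pos (1 / 2 : ℝ)]
    gcongr
  calc (d : ℝ) ^ k * ((r / 2) ^ k * (1 / 2 * c ^ k * (k.factorial : ℝ) ^ σ)) / k.factorial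
      = 1 / 2 * (c * (r / 2)) ^ k * d ^ k * ((k.factorial : ℝ) ^ σ / k.factorial) := by
        rw [mul_pow]; ring
    _ ≤ 1 / 2 * (c * (r / 2)) ^ k * d ^ k * ((Real.exp 1 / d) ^ (1 - σ)) ^ k := by
        rw [h2]; gcongr
    _ = 1 / 2 * (c * (r / 2) * (d * (Real.exp 1 / d) ^ (1 - σ))) ^ k := by
        rw [mul_pow, mul_pow, mul_pow, mul_pow]; ring
    _ ≤ 1 / 2 * (c * (r / 2) * (2 * (d : ℝ) ^ σ)) ^ k := by gcongr
    _ = _ := by ring_nf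

/-- The sub-Gaussian moment bound for a Taylor term of order `k ≤ d`.  With `(2k)! ≤ 4 ^ k (k!) ^ 2`
and `k! ≤ k ^ k` the base becomes `c² r² (e / 2) d k ^ (2σ - 1)`, and `k ^ (2σ - 1) ≤ d ^ (2σ - 1)`
because `σ ≥ 1 / 2`; the constant `3 / 2` only has to exceed `√(e / 2)`. -/
theorem moment_term_le {d k : ℕ} (hk : 0 < k) (hkd : k ≤ d) {c r σ : ℝ} (hc : 0 < c) (hr : 0 < r)
    (hσ : σ ∈ Set.Icc (1 / 2 : ℝ) 1) :
    (1 / 2 * c ^ k * (k.factorial : ℝ) ^ σ) ^ 2 *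
        ((2 * k).factorial * (Real.exp 1 * d * (r / 2) ^ 2 / (2 * k)) ^ k) ≤
      (k.factorial : ℝ) ^ 2 * (1 / 2 * (3 / 2 * (c * r * (d : ℝ) ^ σ)) ^ k) ^ 2 := by
  have hk' : (0 : ℝ) < k := by exact_mod_cast hk
  have hkd' : (k : ℝ) ≤ d := by exact_mod_cast hkd
  have hd' : (0 : ℝ) < d := hk'.trans_le hkd'
  have h1 : ((2 * k).factorial : ℝ) ≤ 4 ^ k * (k.factorial : ℝ) ^ 2 := by
    have h := Nat.choose_mul_factorial_mul_factorial (show k ≤ 2 * k by omega)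
    have h' : (2 * k).choose k ≤ 4 ^ k := by
      have := Nat.choose_le_two_pow (2 * k) k
      rwa [pow_mul] at this
    rw [show 2 * k - k = k by omega] at h
    have h'' : (2 * k).factorial ≤ 4 ^ k * k.factorial ^ 2 := by
      rw [← h, mul_assoc, ← sq]; gcongr
    exact_mod_cast h''
  have h2 : ((k.factorial : ℝ) ^ σ) ^ 2 ≤ (((k : ℝ) ^ σ) ^ 2) ^ k := by
    have : (k.factorial : ℝ) ≤ (k : ℝ) ^ k := by exact_mod_cast Nat.factorial_le_pow k
    calc ((k.factorial : ℝ) ^ σ) ^ 2 ≤ (((k : ℝ) ^ k) ^ σ) ^ 2 := by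
          gcongr
          linarith [hσ.1]
      _ = _ := by
          rw [← Real.rpow_natCast _ k, ← Real.rpow_mul hk'.le, mul_comm, Real.rpow_mul hk'.le,
            Real.rpow_natCast, ← pow_mul, ← pow_mul, mul_comm]
  have h3 : ((k : ℝ) ^ σ) ^ 2 * d / k ≤ ((d : ℝ) ^ σ) ^ 2 := by
    have e : ∀ z : ℝ, 0 < z → (z ^ σ) ^ 2 = z * z ^ (2 * σ - 1) := by
      intro z hz
      rw [Real.rpow_sub hz, Real.rpow_one, ← Real.rpow_natCast, ← Real.rpow_mul hz.le]
      field_simp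
      norm_num
    have : (k : ℝ) ^ (2 * σ - 1) ≤ (d : ℝ) ^ (2 * σ - 1) :=
      Real.rpow_le_rpow hk'.le hkd' (by linarith [hσ.1])
    rw [e k hk', e d hd']
    calc (k : ℝ) * (k : ℝ) ^ (2 * σ - 1) * d / k = d * (k : ℝ) ^ (2 * σ - 1) := by field_simp
      _ ≤ _ := by gcongr
  have he : Real.exp 1 / 2 ≤ 9 / 4 := by linarith [Real.exp_one_lt_three]
  calc (1 / 2 * c ^ k * (k.factorial : ℝ) ^ σ) ^ 2 *
        ((2 * k).factorial * (Real.exp 1 * d * (r / 2) ^ 2 / (2 * k)) ^ k)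
      ≤ (1 / 2) ^ 2 * (c ^ 2) ^ k * (((k : ℝ) ^ σ) ^ 2) ^ k *
        ((4 ^ k * (k.factorial : ℝ) ^ 2) * (Real.exp 1 * d * (r / 2) ^ 2 / (2 * k)) ^ k) := by
        have : (1 / 2 * c ^ k * (k.factorial : ℝ) ^ σ) ^ 2 =
          (1 / 2) ^ 2 * (c ^ 2) ^ k * ((k.factorial : ℝ) ^ σ) ^ 2 := by ring
        rw [this]; gcongr
    _ = (k.factorial : ℝ) ^ 2 * ((1 / 2) ^ 2 *
          (c ^ 2 * ((k : ℝ) ^ σ) ^ 2 * 4 * (Real.exp 1 * d * (r / 2) ^ 2 / (2 * k))) ^ k) := by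
        simp only [mul_pow]; ring
    _ = (k.factorial : ℝ) ^ 2 * ((1 / 2) ^ 2 *
          (c ^ 2 * r ^ 2 * (Real.exp 1 / 2) * (((k : ℝ) ^ σ) ^ 2 * d / k)) ^ k) := by
        congr 3; field_simp; ring
    _ ≤ (k.factorial : ℝ) ^ 2 * ((1 / 2) ^ 2 *
          (c ^ 2 * r ^ 2 * (9 / 4) * ((d : ℝ) ^ σ) ^ 2) ^ k) := by
        gcongr
    _ = _ := by
        rw [mul_pow (1 / 2 : ℝ), ← pow_mul, mul_comm k 2, pow_mul]
        congr 3; ring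

/-- Mean-square bound for a single homogeneous Taylor term.  For `k ≤ d` it comes from the
sub-Gaussian moments of the grid average, for `k > d` from the triangle inequality. -/
theorem sum_sq_dirDeriv_le {d : ℕ} (hd : 0 < d) {κ : Type*} [Fintype κ] (y : κ → ℝ)
    (e : κ ≃ κ) (he : ∀ u, y (e u) = -y u) {c r σ : ℝ} (hc : 0 < c) (hr : 0 < r)
    (hσ : σ ∈ Set.Icc (1 / 2 : ℝ) 1) (hy : ∀ u, |y u| ≤ r / 2) {k : ℕ} (hk : 0 < k)
    {f : (Fin d → ℝ) → ℝ} (hf : ∀ α : Fin k → Fin d, |pderivMulti (List.ofFn α) f 0| ≤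
      1 / 2 * c ^ k * (k.factorial : ℝ) ^ σ) :
    ∑ v : Fin d → κ, (dirDeriv f (fun j => y (v j)) k 0 / k.factorial) ^ 2 ≤
      (Fintype.card κ : ℝ) ^ d * (1 / 2 * (3 / 2 * (c * r * (d : ℝ) ^ σ)) ^ k) ^ 2 := by
  have hf0 : (0 : ℝ) < k.factorial := by positivity
  rcases le_total k d with hkd | hdk
  · have h1 := sum_sq_multilinear_le y e he k (fun α => pderivMulti (List.ofFn α) f 0) hf
    have h2 := sum_pow_le hd y e he (half_pos hr) hy hk
    have h3 := moment_term_le hk hkd hc hr hσ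
    simp only [dirDeriv, zero_smul, div_pow]
    rw [← Finset.sum_div, div_le_iff₀ (by positivity)]
    refine h1.trans ?_
    calc _ ≤ (1 / 2 * c ^ k * (k.factorial : ℝ) ^ σ) ^ 2 * ((Fintype.card κ : ℝ) ^ d *
        ((2 * k).factorial * (Real.exp 1 * d * (r / 2) ^ 2 / (2 * k)) ^ k)) := by gcongr
      _ = (Fintype.card κ : ℝ) ^ d * ((1 / 2 * c ^ k * (k.factorial : ℝ) ^ σ) ^ 2 *
        ((2 * k).factorial * (Real.exp 1 * d * (r / 2) ^ 2 / (2 * k)) ^ k)) := by ring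
      _ ≤ (Fintype.card κ : ℝ) ^ d *
          ((k.factorial : ℝ) ^ 2 * (1 / 2 * (3 / 2 * (c * r * (d : ℝ) ^ σ)) ^ k) ^ 2) := by
        gcongr
      _ = _ := by ring
  · have h1 : ∀ v ∈ (Finset.univ : Finset (Fin d → κ)),
        (dirDeriv f (fun j => y (v j)) k 0 / k.factorial) ^ 2 ≤
          (1 / 2 * (3 / 2 * (c * r * (d : ℝ) ^ σ)) ^ k) ^ 2 := by
      intro v _
      have h2 : |dirDeriv f (fun j => y (v j)) k 0| ≤ _ :=
        abs_dirDeriv_le (ρ := r / 2) (fun i => hy (v i)) (by simpa only [zero_smul] using hf)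
      rw [← sq_abs, abs_div, Nat.abs_cast]
      refine pow_le_pow_left₀ (by positivity) ?_ 2
      refine (div_le_div_of_nonneg_right h2 hf0.le).trans ?_
      refine (trivial_term_le hd hdk hc hr hσ).trans ?_
      have h3 : 0 ≤ c * r * (d : ℝ) ^ σ := by positivity
      have h4 : c * r * (d : ℝ) ^ σ ≤ 3 / 2 * (c * r * (d : ℝ) ^ σ) := by linarith
      exact mul_le_mul_of_nonneg_left (pow_le_pow_left₀ h3 h4 k) (by norm_num)
    refine (Finset.sum_le_sum h1).trans ?_
    simp

/-- Minkowski's inequality against a geometric majorant: functions whose mean squares are at most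
`q ^ (2 k)` have a sum whose mean square is at most that of the geometric tail. -/
theorem sum_sq_sum_le {V : Type*} [Fintype V] (z : ℕ → V → ℝ) {q W : ℝ} (hq : 0 < q) (hq1 : q < 1)
    (hW : 0 ≤ W) (a b : ℕ) (hz : ∀ k ∈ Finset.Ico a b, ∑ v, z k v ^ 2 ≤ W * (q ^ k) ^ 2) :
    ∑ v, (∑ k ∈ Finset.Ico a b, z k v) ^ 2 ≤ W * (q ^ a / (1 - q)) ^ 2 := by
  have hg : ∑ k ∈ Finset.Ico a b, q ^ k ≤ q ^ a / (1 - q) :=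
    geom_sum_Ico_le_of_lt_one hq.le hq1
  have hg0 : 0 ≤ ∑ k ∈ Finset.Ico a b, q ^ k := Finset.sum_nonneg fun _ _ => by positivity
  calc ∑ v, (∑ k ∈ Finset.Ico a b, z k v) ^ 2
      ≤ ∑ v, (∑ k ∈ Finset.Ico a b, q ^ k) * ∑ k ∈ Finset.Ico a b, z k v ^ 2 / q ^ k := by
        refine Finset.sum_le_sum fun v _ => ?_
        refine Finset.sum_sq_le_sum_mul_sum_of_sq_le_mul _ (fun _ _ => by positivity)
          (fun _ _ => by positivity) fun k _ => le_of_eq ?_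
        field_simp
    _ = (∑ k ∈ Finset.Ico a b, q ^ k) * ∑ k ∈ Finset.Ico a b, (∑ v, z k v ^ 2) / q ^ k := by
        rw [← Finset.mul_sum, Finset.sum_comm]
        simp_rw [Finset.sum_div]
    _ ≤ (∑ k ∈ Finset.Ico a b, q ^ k) * ∑ k ∈ Finset.Ico a b, W * q ^ k := by
        refine mul_le_mul_of_nonneg_left (Finset.sum_le_sum fun k hk => ?_) hg0
        rw [div_le_iff₀ (by positivity)]
        refine (hz k hk).trans (le_of_eq ?_)
        ring
    _ = W * (∑ k ∈ Finset.Ico a b, q ^ k) ^ 2 := by rw [← Finset.mul_sum]; ring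
    _ ≤ _ := by gcongr

/-! ### The Taylor tail -/

/-- The weighted sum of the `k`-th Taylor terms that survives the central difference scheme. -/
noncomputable def smoothedTerm {d : ℕ} (m : ℕ) (f : (Fin d → ℝ) → ℝ) (k : ℕ) (x : Fin d → ℝ) : ℝ :=
  (∑ l ∈ Finset.Icc (-(m : ℤ)) m, centralCoeff m l * (l : ℝ) ^ k) *
    (dirDeriv f x k 0 / k.factorial)

/-- By the moment identities for the central difference coefficients, orders `0` and `1` reproduce
the affine part of `f` and orders `2, …, 2m` vanish. -/
theorem sum_smoothedTerm {d : ℕ} {m : ℕ} (hm : 0 < m) {f : (Fin d → ℝ) → ℝ}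
    (hf : ContDiff ℝ (⊤ : ℕ∞) f) (x : Fin d → ℝ) {N : ℕ} (hN : 2 * m + 1 ≤ N) :
    ∑ k ∈ Finset.range N, smoothedTerm m f k x =
      f 0 + fderiv ℝ f 0 x + ∑ k ∈ Finset.Ico (2 * m + 1) N, smoothedTerm m f k x := by
  rw [← Finset.sum_range_add_sum_Ico _ hN]
  congr 1
  obtain ⟨p, hp⟩ : ∃ p, 2 * m = p + 1 := ⟨2 * m - 1, by omega⟩
  rw [hp, Finset.sum_range_succ', Finset.sum_range_succ']
  have h0 : smoothedTerm m f 0 x = f 0 := by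
    simp [smoothedTerm, moment_zero, dirDeriv_zero]
  have h1 : smoothedTerm m f (0 + 1) x = fderiv ℝ f 0 x := by
    rw [smoothedTerm, moment_succ m 0 (by omega)]
    simp [dirDeriv_one hf]
  have h2 : ∑ k ∈ Finset.range p, smoothedTerm m f (k + 1 + 1) x = 0 := by
    refine Finset.sum_eq_zero fun k hk => ?_
    have := Finset.mem_range.1 hk
    rw [smoothedTerm, moment_succ m (k + 1) (by omega)]
    simp
  rw [h0, h1, h2]; ring

/-- Taylor's theorem along each ray `t ↦ f (t • x)`, summed over the stencil. -/
theorem abs_smoothing_sub_le {d : ℕ} {m : ℕ} {f : (Fin d → ℝ) → ℝ}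
    (hf : ContDiff ℝ (⊤ : ℕ∞) f) (x : Fin d → ℝ) (N : ℕ) {M : ℝ}
    (hM : ∀ t : ℝ, |t| ≤ m → |dirDeriv f x (N + 1) t| ≤ M) :
    |smoothing m f x - ∑ k ∈ Finset.range (N + 1), smoothedTerm m f k x| ≤
      (∑ l ∈ Finset.Icc (-(m : ℤ)) m, |centralCoeff m l|) *
        (M * (m : ℝ) ^ (N + 1) / ((N + 1).factorial : ℝ)) := by
  have hM0 : 0 ≤ M := (abs_nonneg _).trans (hM 0 (by simp))
  have h1 : ∑ k ∈ Finset.range (N + 1), smoothedTerm m f k x =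
      ∑ l ∈ Finset.Icc (-(m : ℤ)) m, centralCoeff m l *
        ∑ k ∈ Finset.range (N + 1), dirDeriv f x k 0 * (l : ℝ) ^ k / (k.factorial : ℝ) := by
    simp_rw [smoothedTerm, Finset.sum_mul, Finset.mul_sum]
    rw [Finset.sum_comm]
    exact Finset.sum_congr rfl fun l _ => Finset.sum_congr rfl fun k _ => by ring
  rw [h1, smoothing, ← Finset.sum_sub_distrib, Finset.sum_mul]
  refine (Finset.abs_sum_le_sum_abs _ _).trans (Finset.sum_le_sum fun l hl => ?_)
  rw [Finset.mem_Icc] at hl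
  have hlm : |(l : ℝ)| ≤ m := by
    rw [abs_le]; exact ⟨by exact_mod_cast hl.1, by exact_mod_cast hl.2⟩
  rw [← mul_sub, abs_mul]
  refine mul_le_mul_of_nonneg_left ?_ (abs_nonneg _)
  have h := taylor_of_deriv_seq (dirDeriv f x) (hasDerivAt_dirDeriv hf x) N hM hlm
  rw [dirDeriv_zero] at h
  refine h.trans ?_
  gcongr

/-- Mean-square bound for finite sums of the surviving Taylor terms of order above `2m`. -/
theorem sum_sq_tail_le {d : ℕ} (hd : 0 < d) {κ : Type*} [Fintype κ] (y : κ → ℝ)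
    (e : κ ≃ κ) (he : ∀ u, y (e u) = -y u) {c r σ : ℝ} (hc : 0 < c) (hr : 0 < r)
    (hσ : σ ∈ Set.Icc (1 / 2 : ℝ) 1) (hy : ∀ u, |y u| ≤ r / 2) {m : ℕ} (hm : 0 < m)
    {f : (Fin d → ℝ) → ℝ}
    (hG : ∀ α : List (Fin d), |pderivMulti α f 0| ≤
          1 / 2 * c ^ α.length * ((Nat.factorial α.length : ℕ) : ℝ) ^ σ)
    {q : ℝ} (hq : q = 3 / 2 * (m * (c * r * (d : ℝ) ^ σ))) (hq1 : q < 1) (N : ℕ) :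
    ∑ v : Fin d → κ, (∑ k ∈ Finset.Ico (2 * m + 1) (N + 1),
        smoothedTerm m f k (fun j => y (v j))) ^ 2 ≤
      (Fintype.card κ : ℝ) ^ d * (q ^ (2 * m + 1) / (1 - q)) ^ 2 := by
  have hd' : (0 : ℝ) < d := by exact_mod_cast hd
  have hm' : (0 : ℝ) < m := by exact_mod_cast hm
  have hu : 0 < c * r * (d : ℝ) ^ σ := by positivity
  have hq0 : 0 < q := by rw [hq]; positivity
  have hz : ∀ k ∈ Finset.Ico (2 * m + 1) (N + 1),
      ∑ v : Fin d → κ, smoothedTerm m f k (fun j => y (v j)) ^ 2 ≤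
        (Fintype.card κ : ℝ) ^ d * (q ^ k) ^ 2 := by
    intro k hk
    have hk0 : 0 < k := by have := (Finset.mem_Ico.1 hk).1; omega
    have h1 := sum_sq_dirDeriv_le hd y e he hc hr hσ hy hk0 (f := f) fun α => by
      have := hG (List.ofFn α)
      simpa only [List.length_ofFn] using this
    have h2 : (∑ l ∈ Finset.Icc (-(m : ℤ)) m, centralCoeff m l * (l : ℝ) ^ k) ^ 2 ≤
        (2 * (m : ℝ) ^ k) ^ 2 := by
      obtain ⟨p, rfl⟩ : ∃ p, k = p + 1 := ⟨k - 1, by omega⟩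
      rw [← sq_abs]
      exact pow_le_pow_left₀ (abs_nonneg _) (abs_moment_le m p) 2
    simp only [smoothedTerm, mul_pow _ _ 2]
    rw [← Finset.mul_sum]
    refine (mul_le_mul h2 h1 (Finset.sum_nonneg fun _ _ => sq_nonneg _) (sq_nonneg _)).trans
      (le_of_eq ?_)
    rw [hq, show (3 / 2 * ((m : ℝ) * (c * r * (d : ℝ) ^ σ))) =
      m * (3 / 2 * (c * r * (d : ℝ) ^ σ)) by ring, mul_pow (m : ℝ)]
    ring
  exact sum_sq_sum_le (fun k (v : Fin d → κ) => smoothedTerm m f k (fun j => y (v j))) hq0 hq1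
    (pow_nonneg (Nat.cast_nonneg _) _) _ _ hz

/-- The Taylor remainder vanishes in the limit, so the surviving Taylor terms sum to the
deviation of the smoothing from the first-order expansion. -/
theorem tendsto_tail {d : ℕ} (hd : 0 < d) {c r σ : ℝ} (hc : 0 < c) (hr : 0 < r)
    (hσ : σ ∈ Set.Icc (1 / 2 : ℝ) 1) {x : Fin d → ℝ} (hx : ∀ i, |x i| ≤ r / 2) {m : ℕ} (hm : 0 < m)
    {f : (Fin d → ℝ) → ℝ} (hf : ContDiff ℝ (⊤ : ℕ∞) f)
    (hG : ∀ x : Fin d → ℝ, (∀ i, x i ∈ Set.Icc (-(m * r)) (m * r)) →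
      ∀ α : List (Fin d), |pderivMulti α f x| ≤
          1 / 2 * c ^ α.length * ((Nat.factorial α.length : ℕ) : ℝ) ^ σ)
    {q : ℝ} (hq : q = 3 / 2 * (m * (c * r * (d : ℝ) ^ σ))) (hq1 : q < 1) :
    Filter.Tendsto (fun N => ∑ k ∈ Finset.Ico (2 * m + 1) (N + 1), smoothedTerm m f k x)
      Filter.atTop (nhds (smoothing m f x - f 0 - fderiv ℝ f 0 x)) := by
  have hd' : (0 : ℝ) < d := by exact_mod_cast hd
  have hm' : (0 : ℝ) < m := by exact_mod_cast hm
  have hu : 0 < c * r * (d : ℝ) ^ σ := by positivity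
  have hq0 : 0 < q := by rw [hq]; positivity
  set K : ℝ := ∑ l ∈ Finset.Icc (-(m : ℤ)) m, |centralCoeff m l| with hK
  have hK0 : 0 ≤ K := Finset.sum_nonneg fun _ _ => abs_nonneg _
  rw [tendsto_iff_dist_tendsto_zero]
  have hz : Filter.Tendsto (fun N : ℕ => K * q ^ (N + 1)) Filter.atTop (nhds 0) := by
    have := ((tendsto_pow_atTop_nhds_zero_of_lt_one hq0.le hq1).comp
      (Filter.tendsto_add_atTop_nat 1)).const_mul K
    simpa using this
  refine squeeze_zero' (Filter.Eventually.of_forall fun _ => dist_nonneg) ?_ hz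
  filter_upwards [Filter.eventually_ge_atTop (d + 2 * m)] with N hN
  have h1 : smoothing m f x - f 0 - fderiv ℝ f 0 x -
      ∑ k ∈ Finset.Ico (2 * m + 1) (N + 1), smoothedTerm m f k x =
      smoothing m f x - ∑ k ∈ Finset.range (N + 1), smoothedTerm m f k x := by
    rw [sum_smoothedTerm hm hf x (by omega)]
    ring
  rw [dist_comm, Real.dist_eq, h1]
  have hM : ∀ t : ℝ, |t| ≤ m → |dirDeriv f x (N + 1) t| ≤ (d : ℝ) ^ (N + 1) *
      ((r / 2) ^ (N + 1) * (1 / 2 * c ^ (N + 1) * ((N + 1).factorial : ℝ) ^ σ)) := by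
    intro t ht
    refine abs_dirDeriv_le hx fun α => ?_
    have := hG (t • x) (fun i => ?_) (List.ofFn α)
    · simpa only [List.length_ofFn] using this
    · rw [Set.mem_Icc, ← abs_le, Pi.smul_apply, smul_eq_mul, abs_mul]
      have : |x i| ≤ r := (hx i).trans (by linarith)
      gcongr
  refine (abs_smoothing_sub_le hf x N hM).trans ?_
  refine mul_le_mul_of_nonneg_left ?_ hK0
  have h2 := trivial_term_le hd (show d ≤ N + 1 by omega) hc hr hσ
  rw [mul_div_right_comm]
  have h3 : (m : ℝ) * (c * r * (d : ℝ) ^ σ) ≤ q := by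
    rw [hq]; linarith [mul_pos hm' hu]
  calc _ ≤ 1 / 2 * (c * r * (d : ℝ) ^ σ) ^ (N + 1) * (m : ℝ) ^ (N + 1) :=
        mul_le_mul_of_nonneg_right h2 (by positivity)
    _ = 1 / 2 * (m * (c * r * (d : ℝ) ^ σ)) ^ (N + 1) := by rw [mul_pow (m : ℝ)]; ring
    _ ≤ 1 * q ^ (N + 1) := by
      gcongr
      norm_num
    _ = _ := one_mul _

/-- The mean-square deviation, with the grid replaced by any product of a finite set of nodes
symmetric about `0`: the finite-sum bound passes to the limit. -/
theorem mean_sq_le {d : ℕ} (hd : 0 < d) {κ : Type*} [Fintype κ] (y : κ → ℝ)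
    (e : κ ≃ κ) (he : ∀ u, y (e u) = -y u) {c r σ : ℝ} (hc : 0 < c) (hr : 0 < r)
    (hσ : σ ∈ Set.Icc (1 / 2 : ℝ) 1) (hy : ∀ u, |y u| ≤ r / 2) {m : ℕ} (hm : 0 < m)
    {f : (Fin d → ℝ) → ℝ} (hf : ContDiff ℝ (⊤ : ℕ∞) f)
    (hG : ∀ x : Fin d → ℝ, (∀ i, x i ∈ Set.Icc (-(m * r)) (m * r)) →
      ∀ α : List (Fin d), |pderivMulti α f x| ≤
          1 / 2 * c ^ α.length * ((Nat.factorial α.length : ℕ) : ℝ) ^ σ)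
    {q : ℝ} (hq : q = 3 / 2 * (m * (c * r * (d : ℝ) ^ σ))) (hq1 : q < 1) :
    ∑ v : Fin d → κ, (smoothing m f (fun j => y (v j)) - f 0 -
        fderiv ℝ f 0 (fun j => y (v j))) ^ 2 ≤
      (Fintype.card κ : ℝ) ^ d * (q ^ (2 * m + 1) / (1 - q)) ^ 2 := by
  have h0 : ∀ i : Fin d, (0 : Fin d → ℝ) i ∈ Set.Icc (-(m * r)) (m * r) := by
    intro i
    have : 0 ≤ m * r := by positivity
    simpa using this
  have hlim := tendsto_finsetSum (Finset.univ : Finset (Fin d → κ)) fun v _ =>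
    (tendsto_tail hd hc hr hσ (x := fun j => y (v j)) (fun i => hy (v i)) hm hf hG hq hq1).pow 2
  exact le_of_tendsto' hlim fun N =>
    sum_sq_tail_le hd y e he hc hr hσ hy hm (hG 0 h0) hq hq1 N

/-! ### Choice of parameters -/

/-- The choice of `r` and `S`.  Writing `δ` for the base of the `1 / (2m)`-th power in `r`, one has
`q ≤ (3 / 5) δ ^ (1 / (2m))`, so `q ^ (2m) ≤ (3 / 5) ^ 4 δ`, while `q δ` is a small multiple of
`r ε'`, which is comparable with `1 / S`. -/
theorem parameter_bound {d m S : ℕ} (hd : 0 < d) {c σ ε' r q : ℝ} (hc : 0 < c)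
    (hσ : σ ∈ Set.Icc (1 / 2 : ℝ) 1) (hε' : ε' ∈ Set.Ioo 0 c) (hm : 2 ≤ m)
    (hr : r = (2 : ℝ) ^ σ / (2 * Real.exp 1 * m * c * (d : ℝ) ^ σ) *
      ((2 : ℝ) ^ σ * ε' / (272 * Real.pi * Real.exp 1 * m * c * (d : ℝ) ^ σ)) ^
        (1 / (2 * (m : ℝ))))
    (hS : S = ⌈8 * Real.pi / (r * ε')⌉₊)
    (hq : q = 3 / 2 * (m * (c * r * (d : ℝ) ^ σ))) :
    0 < r ∧ q < 1 ∧ (q ^ (2 * m + 1) / (1 - q)) ^ 2 ≤ 1 / (144 * (S : ℝ) ^ 2) := by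
  obtain ⟨hs0, hs2⟩ := rpow_two_bounds hσ
  have hd1 : (1 : ℝ) ≤ d := by exact_mod_cast hd
  have hm2 : (2 : ℝ) ≤ m := by exact_mod_cast hm
  have hm0 : (0 : ℝ) < m := by linarith
  have hdσ : 1 ≤ (d : ℝ) ^ σ := Real.one_le_rpow hd1 (by linarith [hσ.1])
  have hdσ0 : 0 < (d : ℝ) ^ σ := by linarith
  have hπ := Real.pi_gt_three
  have he := Real.exp_one_gt_d9
  have hε0 := hε'.1
  have hεc := hε'.2
  set s : ℝ := (2 : ℝ) ^ σ
  set D : ℝ := (d : ℝ) ^ σ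
  set e : ℝ := Real.exp 1
  have he0 : 0 < e := by linarith
  set δ : ℝ := s * ε' / (272 * Real.pi * e * m * c * D) with hδ
  have hδ0 : 0 < δ := by positivity
  set τ : ℝ := δ ^ (1 / (2 * (m : ℝ))) with hτ
  have hτ0 : 0 < τ := Real.rpow_pos_of_pos hδ0 _
  have hτδ : τ ^ (2 * m) = δ := by
    rw [hτ, ← Real.rpow_natCast, ← Real.rpow_mul hδ0.le]
    push_cast
    rw [one_div, inv_mul_cancel₀ (by positivity), Real.rpow_one]
  have hden : 1 ≤ m * D := by nlinarith
  have hδ1 : δ ≤ 1 := by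
    rw [hδ, div_le_one (by positivity)]
    have h1 : s * ε' ≤ 2 * c := by gcongr
    have h2 : 2 ≤ 272 * Real.pi * e := by nlinarith
    calc s * ε' ≤ 2 * c := h1
      _ ≤ 272 * Real.pi * e * (m * D) * c := by
        have : 2 * 1 ≤ 272 * Real.pi * e * (m * D) := by gcongr
        nlinarith
      _ = _ := by ring
  have hτ1 : τ ≤ 1 := Real.rpow_le_one hδ0.le hδ1 (by positivity)
  have hr0 : 0 < r := by rw [hr]; positivity
  have hp : m * (c * r * D) = s / (2 * e) * τ := by
    rw [hr]; field_simp
  have hqτ : q ≤ 3 / 5 * τ := by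
    have : s / (2 * e) ≤ 2 / 5 := by
      rw [div_le_iff₀ (by positivity)]; linarith
    rw [hq, hp]
    nlinarith
  have hq0 : 0 < q := by rw [hq]; positivity
  have hq35 : q ≤ 3 / 5 := by nlinarith
  refine ⟨hr0, by linarith, ?_⟩
  have hpow : q ^ (2 * m) ≤ (3 / 5) ^ 4 * δ := by
    calc q ^ (2 * m) ≤ (3 / 5 * τ) ^ (2 * m) := by gcongr
      _ = (3 / 5) ^ (2 * m) * δ := by rw [mul_pow, hτδ]
      _ ≤ _ := by
        gcongr ?_ * δ
        exact pow_le_pow_of_le_one (by norm_num) (by norm_num) (by omega)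
  have hrε : r * ε' ≤ 1 := by
    have h1 : m * (c * r * D) ≤ 1 := by
      rw [hq] at hq35; linarith
    have h2 : c * r * 1 ≤ c * r * (m * D) := by gcongr
    have h3 : r * ε' ≤ r * c := by gcongr
    nlinarith
  have hrε0 : 0 < r * ε' := by positivity
  have hSle : (S : ℝ) ≤ 16 * Real.pi / (r * ε') := by
    have h1 : (1 : ℝ) ≤ 8 * Real.pi / (r * ε') := by
      rw [le_div_iff₀ hrε0]; linarith
    have h2 := (Nat.ceil_lt_add_one (show 0 ≤ 8 * Real.pi / (r * ε') by positivity)).le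
    rw [← hS] at h2
    calc (S : ℝ) ≤ 8 * Real.pi / (r * ε') + 8 * Real.pi / (r * ε') := by linarith
      _ = _ := by ring
  have hS0 : (0 : ℝ) < S := by
    rw [hS]; exact_mod_cast Nat.ceil_pos.2 (by positivity)
  -- `m c r D δ` collapses to a multiple of `r ε'`, the quantity controlled by `S`.
  have hqδ : q * δ = 3 / 2 * (s * (r * ε') / (272 * Real.pi * e)) := by
    rw [hq, hδ]; field_simp
  have hmain : q ^ (2 * m + 1) / (1 - q) ≤ 1 / (12 * S) := by
    have h1 : q ^ (2 * m + 1) / (1 - q) ≤ (3 / 5) ^ 4 * δ * q / (2 / 5) := by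
      rw [pow_succ]
      gcongr
      linarith
    have h2 : r * ε' / (192 * Real.pi) ≤ 1 / (12 * S) := by
      rw [le_div_iff₀ hrε0] at hSle
      rw [div_le_div_iff₀ (by positivity) (by positivity)]
      linarith
    refine h1.trans (le_trans ?_ h2)
    have h3 : s * (r * ε') / (272 * Real.pi * e) ≤ r * ε' / (192 * Real.pi) := by
      rw [div_le_div_iff₀ (by positivity) (by positivity)]
      have : s * 192 ≤ 272 * e := by linarith
      have h4 : (s * 192) * (r * ε' * Real.pi) ≤ (272 * e) * (r * ε' * Real.pi) := by gcongr
      linarith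
    have h5 : 0 ≤ s * (r * ε') / (272 * Real.pi * e) := by positivity
    calc (3 / 5 : ℝ) ^ 4 * δ * q / (2 / 5) = (3 / 5) ^ 4 * (q * δ) / (2 / 5) := by ring
      _ ≤ _ := by rw [hqδ]; linarith
  have h0 : 0 ≤ q ^ (2 * m + 1) / (1 - q) := div_nonneg (by positivity) (by linarith)
  calc (q ^ (2 * m + 1) / (1 - q)) ^ 2 ≤ (1 / (12 * S)) ^ 2 := by gcongr
    _ = _ := by ring

theorem justification_of_approximate_linearity
    (d : ℕ) (hd : 0 < d) (c σ ε' : ℝ) (hc : 0 < c)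
    (hσ : σ ∈ Set.Icc (1 / 2 : ℝ) 1) (hε' : ε' ∈ Set.Ioo 0 c)
    (m : ℕ) (hm : m = max (Int.toNat ⌈Real.logb 2 (c * (d : ℝ) ^ σ / ε')⌉) 2)
    (r : ℝ)
    (hr : r = (2 : ℝ) ^ σ / (2 * Real.exp 1 * m * c * (d : ℝ) ^ σ) *
      ((2 : ℝ) ^ σ * ε' / (272 * Real.pi * Real.exp 1 * m * c * (d : ℝ) ^ σ)) ^
        (1 / (2 * (m : ℝ))))
    (S : ℕ) (hS : S = ⌈8 * Real.pi / (r * ε')⌉₊)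
    (n : ℕ) (hn : n = ⌈Real.logb 2 (12 * c / ε')⌉₊)
    (f : (Fin d → ℝ) → ℝ) (hf : ContDiff ℝ (⊤ : ℕ∞) f)
    (hGevrey : ∀ y : Fin d → ℝ, (∀ i, y i ∈ Set.Icc (-(m * r)) (m * r)) →
      ∀ α : List (Fin d),
        |pderivMulti α f y| ≤
          1 / 2 * c ^ α.length * ((Nat.factorial α.length : ℕ) : ℝ) ^ σ) :
    (1 / ((2 : ℝ) ^ n) ^ d) *
      ∑ v : Fin d → Fin (2 ^ n),
        |smoothing m f (gridPoint n r v) - f 0 -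
          fderiv ℝ f 0 (gridPoint n r v)| ^ 2 ≤
      1 / (144 * (S : ℝ) ^ 2) := by

  have hm2 : 2 ≤ m := hm ▸ le_max_right _ _
  obtain ⟨hr0, hq1, hfin⟩ := parameter_bound hd hc hσ hε' hm2 hr hS rfl
  have h2n : (0 : ℝ) < 2 ^ n := by positivity
  set y : Fin (2 ^ n) → ℝ := fun u => r / 2 ^ n * (((u : ℕ) : ℝ) - 2 ^ n / 2 + 1 / 2) with hy
  have hrev : ∀ u, y (Fin.revPerm u) = -y u := by
    intro u
    have hu : (u : ℕ) + 1 ≤ 2 ^ n := u.isLt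
    simp only [hy, Fin.revPerm_apply, Fin.val_rev]
    push_cast [Nat.cast_sub hu]
    ring
  have hyr : ∀ u, |y u| ≤ r / 2 := by
    intro u
    have hu : ((u : ℕ) : ℝ) + 1 ≤ 2 ^ n := by exact_mod_cast u.isLt
    have hu0 : (0 : ℝ) ≤ (u : ℕ) := Nat.cast_nonneg _
    simp only [hy]
    rw [abs_mul, abs_of_pos (by positivity)]
    calc r / 2 ^ n * |((u : ℕ) : ℝ) - 2 ^ n / 2 + 1 / 2| ≤ r / 2 ^ n * (2 ^ n / 2) := by
          gcongr
          rw [abs_le]; constructor <;> linarith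
      _ = r / 2 := by field_simp
  have hmain := mean_sq_le hd y Fin.revPerm hrev hc hr0 hσ hyr (by omega) hf hGevrey rfl hq1
  rw [Fintype.card_fin] at hmain
  push_cast at hmain
  simp_rw [sq_abs]
  rw [one_div, inv_mul_le_iff₀ (by positivity)]
  exact hmain.trans (by gcongr)
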